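/- arXiv:1403.5871 — 3 statements merged into one kernel-verified Lean document; each statement's English description precedes it below -/
import Mathlib

section
/- Assume NS ⊆ T (Restriction 1: all liars are Sybil), the noise-free assumption (R ⊆ T implies gen(R) = NS), that every receiver set containing a liar generates a false view (R ∩ L ≠ ∅ implies gen(R) ≠ NS), Condition 1 (for every R ⊆ I, gen(R) ∩ C ≠ ∅), and that C ≠ ∅. Then exactly one view-consistent view is generated across all receiver sets, and it is the true view: there exists R ⊆ I with gen(R) = NS and gen(R) view-consistent, and for every receiver set R ⊆ I, if gen(R) is view-consistent then gen(R) = NS. -/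
/-- Theorem: under Restriction 1 (`NS ⊆ T`), the noise-free assumption,
Condition 1, the fact that lying receiver sets generate false views, and
`C ≠ ∅`, exactly one view-consistent view is generated across all receiver
sets, and it is the true view `NS`. -/
theorem unique_consistent_view_is_true_view
    {α : Type*} [DecidableEq α]
    (I NS T : Finset α) (hNS : NS ⊆ I) (hT : T ⊆ I)
    (gen : Finset α → Finset α)
    (hRestrict1 : NS ⊆ T)
    (hNoiseFree : ∀ R : Finset α, R ⊆ T → gen R = NS)
    (hLiarFalse : ∀ R : Finset α, R ⊆ I → (R ∩ (I \ T)).Nonempty → gen R ≠ NS)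
    (hCond1 : ∀ R : Finset α, R ⊆ I → (gen R ∩ (NS ∩ T)).Nonempty)
    (hC : (NS ∩ T).Nonempty) :
    (∃ R : Finset α, R ⊆ I ∧ gen R = NS ∧
      (∀ Q : Finset α, Q ⊆ gen R → gen Q = gen R)) ∧
    (∀ R : Finset α, R ⊆ I →
      (∀ Q : Finset α, Q ⊆ gen R → gen Q = gen R) → gen R = NS) := by
  refine ⟨⟨NS, hNS, hNoiseFree NS hRestrict1, ?_⟩, ?_⟩
  · intro Q hQ
    rw [hNoiseFree NS hRestrict1] at hQ ⊢
    exact hNoiseFree Q (hQ.trans hRestrict1)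
  · intro R hR h
    obtain ⟨c, hc⟩ := hCond1 R hR
    simp only [Finset.mem_inter] at hc
    rw [← h {c} (Finset.singleton_subset_iff.mpr hc.1)]
    exact hNoiseFree {c} (Finset.singleton_subset_iff.mpr hc.2.2)
end

section
/- Let NS be a finite nonempty set, let 0 < γ < 1/2, and let V¹ and V² be two views satisfying V¹ ⊆ NS and V² ⊆ NS (no Sybil identities are accepted) and misclassifying strictly fewer than a γ fraction of the non-Sybil identities: |NS \ V¹| < γ·|NS| and |NS \ V²| < γ·|NS|. Then |V¹ ∩ V²| > (1 − 2γ)·|NS|, |V¹ \ V²| < γ·|NS|, and |V² \ V¹| < γ·|NS|; consequently γ·|V¹ ∩ V²| > (1 − 2γ)·|V¹ \ V²| and γ·|V¹ ∩ V²| > (1 − 2γ)·|V² \ V¹|, i.e., V¹ and V² are γ-similar. -/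
/-- Lemma: two views that accept no Sybils and misclassify strictly fewer than a
`γ` fraction of the non-Sybil identities are `γ`-similar (for `0 < γ < 1/2`). -/
theorem truthful_views_gamma_similar
    {α : Type*} [DecidableEq α]
    (NS : Finset α) (hNS : NS.Nonempty)
    (γ : ℝ) (hγ0 : 0 < γ) (hγhalf : γ < 1 / 2)
    (V₁ V₂ : Finset α) (hV₁ : V₁ ⊆ NS) (hV₂ : V₂ ⊆ NS)
    (hmis₁ : ((NS \ V₁).card : ℝ) < γ * NS.card)
    (hmis₂ : ((NS \ V₂).card : ℝ) < γ * NS.card) :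
    ((1 - 2 * γ) * NS.card < ((V₁ ∩ V₂).card : ℝ)) ∧
    (((V₁ \ V₂).card : ℝ) < γ * NS.card) ∧
    (((V₂ \ V₁).card : ℝ) < γ * NS.card) ∧
    ((1 - 2 * γ) * ((V₁ \ V₂).card : ℝ) < γ * ((V₁ ∩ V₂).card : ℝ)) ∧
    ((1 - 2 * γ) * ((V₂ \ V₁).card : ℝ) < γ * ((V₁ ∩ V₂).card : ℝ)) := by
  have e1 : ((V₁ \ V₂).card : ℝ) ≤ (NS \ V₂).card := by
    exact_mod_cast Finset.card_le_card (Finset.sdiff_subset_sdiff hV₁ (Finset.Subset.refl _))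
  have e2 : ((V₂ \ V₁).card : ℝ) ≤ (NS \ V₁).card := by
    exact_mod_cast Finset.card_le_card (Finset.sdiff_subset_sdiff hV₂ (Finset.Subset.refl _))
  have e3 : ((NS \ V₁).card : ℝ) + V₁.card = NS.card := by
    exact_mod_cast Finset.card_sdiff_add_card_eq_card hV₁
  have e4 : ((V₁ \ V₂).card : ℝ) + (V₁ ∩ V₂).card = V₁.card := by
    exact_mod_cast Finset.card_sdiff_add_card_inter V₁ V₂
  have h1 : (1 - 2 * γ) * NS.card < ((V₁ ∩ V₂).card : ℝ) := by linarith
  have h2 : ((V₁ \ V₂).card : ℝ) < γ * NS.card := by linarith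
  have h3 : ((V₂ \ V₁).card : ℝ) < γ * NS.card := by linarith
  have hp : 0 < 1 - 2 * γ := by linarith
  have k1 := mul_lt_mul_of_pos_left h1 hγ0
  have k2 := mul_lt_mul_of_pos_left h2 hp
  have k3 := mul_lt_mul_of_pos_left h3 hp
  exact ⟨h1, h2, h3, by linarith, by linarith⟩
end

section
/- Let n ≥ 1 and let w : Fin (n+1) → ℝ. Let μ = (∑_{i < n} w(i)) / n be the mean of the first n coordinates and μ' = (∑_{i < n+1} w(i)) / (n+1) the mean of all n+1 coordinates. Then ∑_{i < n} (w(i) − μ)² ≤ ∑_{i < n+1} (w(i) − μ')². Consequently, the squared signalprint distance cannot decrease when an additional observer is added to a receiver set: uncorrelated RSSI vectors cannot become correlated by increasing the dimension, so adding an identity to a receiver set can change a classification only from Sybil to non-Sybil, not vice versa. -/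
/-- The squared signalprint distance, which equals the sum of squared deviations
of the RSSI-difference coordinates from their mean, cannot decrease when an
additional observer is appended. -/
theorem sq_deviation_sum_mono {n : ℕ} (hn : 1 ≤ n) (w : Fin (n + 1) → ℝ) :
    (∑ i : Fin n, (w i.castSucc - (∑ j : Fin n, w j.castSucc) / n) ^ 2) ≤
      ∑ i : Fin (n + 1), (w i - (∑ j : Fin (n + 1), w j) / (n + 1)) ^ 2 := by
  have hn0 : (n : ℝ) ≠ 0 := by
    have : n ≠ 0 := by omega
    exact_mod_cast this
  generalize (∑ j : Fin (n + 1), w j) / ((n : ℝ) + 1) = c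
  rw [Fin.sum_univ_castSucc]
  set m := (∑ j : Fin n, w j.castSucc) / (n : ℝ) with hm
  have hS : ∑ j : Fin n, w j.castSucc = n * m := by
    rw [hm]; field_simp
  have key : ∑ i : Fin n, (w i.castSucc - c) ^ 2
      = ∑ i : Fin n, (w i.castSucc - m) ^ 2 + n * (m - c) ^ 2 := by
    have h : ∀ i : Fin n, (w i.castSucc - c) ^ 2
        = (w i.castSucc - m) ^ 2 + (2 * (m - c) * w i.castSucc + (c ^ 2 - m ^ 2)) := by
      intro i; ring
    rw [Finset.sum_congr rfl (fun i _ => h i), Finset.sum_add_distrib, Finset.sum_add_distrib,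
      ← Finset.mul_sum, hS]
    simp only [Finset.sum_const, Finset.card_univ, Fintype.card_fin, nsmul_eq_mul]
    ring
  rw [key]
  have h1 : 0 ≤ (n : ℝ) * (m - c) ^ 2 := by positivity
  have h2 : 0 ≤ (w (Fin.last n) - c) ^ 2 := sq_nonneg _
  linarith
end
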